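/- arXiv:2307.06438 — 2 statements merged into one kernel-verified Lean document; each statement's English description precedes it below -/
import Mathlib

section
/- Define Λ³₈ = {θ⌟Φ : θ a 1-form on ℝ^8} and Λ³₄₈ = {γ a 3-form on ℝ^8 : γ_{abc}Φ_{abci} = 0 for all i}. Then the map θ ↦ θ⌟Φ is injective, the 56-dimensional space of 3-forms on ℝ^8 is the orthogonal direct sum of Λ³₈ and Λ³₄₈ (with respect to ⟨γ,η⟩ = γ_{ijk}η_{ijk}), dim Λ³₈ = 8 and dim Λ³₄₈ = 48. -/
/-!
We work in ℝ⁸ with the standard basis `e₀, …, e₇`.  A `k`-form is a totally antisymmetric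
map `(Fin 8)^k → ℝ`; repeated indices are summed over `Fin 8` and `kd` is the Kronecker
delta.  `Phi` is the fundamental 4-form of the standard `Spin(7)`-structure on ℝ⁸,
`Φ = -e₀₁₂₇ + e₀₂₃₆ - e₀₃₄₇ - e₀₅₆₇ + e₀₁₄₆ + e₀₂₄₅ - e₀₁₃₅
     - e₃₄₅₆ - e₁₄₅₇ - e₁₂₅₆ - e₁₂₃₄ - e₂₃₅₇ - e₁₃₆₇ + e₂₄₆₇`.
-/

noncomputable section

/-- Kronecker delta on `Fin 8`. -/
def kd (a b : Fin 8) : ℝ := if a = b then 1 else 0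

/-- Component at the indices `(i,j,k,l)` of the wedge product `e_a ∧ e_b ∧ e_c ∧ e_d`
of standard coordinate 1-forms, normalized so that `(e_a ∧ e_b ∧ e_c ∧ e_d)_{abcd} = 1`;
it is the alternating sum of products of Kronecker deltas. -/
def wedge4 (a b c d i j k l : Fin 8) : ℝ :=
  Matrix.det !![kd a i, kd a j, kd a k, kd a l;
                kd b i, kd b j, kd b k, kd b l;
                kd c i, kd c j, kd c k, kd c l;
                kd d i, kd d j, kd d k, kd d l]

/-- The fundamental 4-form `Φ` of the standard `Spin(7)`-structure on `ℝ⁸`, in components: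
the totally antisymmetric 4-tensor with `Φ_{0127} = -1`, `Φ_{0236} = 1`, `Φ_{0347} = -1`,
`Φ_{0567} = -1`, `Φ_{0146} = 1`, `Φ_{0245} = 1`, `Φ_{0135} = -1`, `Φ_{3456} = -1`,
`Φ_{1457} = -1`, `Φ_{1256} = -1`, `Φ_{1234} = -1`, `Φ_{2357} = -1`, `Φ_{1367} = -1`,
`Φ_{2467} = 1`, all components not obtained from these by permutation being zero. -/
def Phi (i j k l : Fin 8) : ℝ :=
    -wedge4 0 1 2 7 i j k l + wedge4 0 2 3 6 i j k l - wedge4 0 3 4 7 i j k l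
  - wedge4 0 5 6 7 i j k l + wedge4 0 1 4 6 i j k l + wedge4 0 2 4 5 i j k l
  - wedge4 0 1 3 5 i j k l - wedge4 3 4 5 6 i j k l - wedge4 1 4 5 7 i j k l
  - wedge4 1 2 5 6 i j k l - wedge4 1 2 3 4 i j k l - wedge4 2 3 5 7 i j k l
  - wedge4 1 3 6 7 i j k l + wedge4 2 4 6 7 i j k l

/-- Totally antisymmetric 3-tensors on ℝ⁸ (3-forms). -/
def ThreeForm : Submodule ℝ (Fin 8 → Fin 8 → Fin 8 → ℝ) where
  carrier := {γ | ∀ i j k, γ i j k = -γ j i k ∧ γ i j k = -γ i k j}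
  zero_mem' := by intro i j k; constructor <;> simp
  add_mem' := by
    intro a b ha hb i j k
    constructor
    · simp only [Pi.add_apply, (ha i j k).1, (hb i j k).1]; ring
    · simp only [Pi.add_apply, (ha i j k).2, (hb i j k).2]; ring
  smul_mem' := by
    intro c a ha i j k
    constructor
    · simp only [Pi.smul_apply, smul_eq_mul, (ha i j k).1]; ring
    · simp only [Pi.smul_apply, smul_eq_mul, (ha i j k).2]; ring

/-- Interior product with `Φ`: `θ ↦ θ⌟Φ`, `(θ⌟Φ)_{klm} = θ_s Φ_{sklm}`. -/
def intPhi : (Fin 8 → ℝ) →ₗ[ℝ] (Fin 8 → Fin 8 → Fin 8 → ℝ) where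
  toFun θ := fun k l m => ∑ s, θ s * Phi s k l m
  map_add' θ η := by
    funext k l m
    simp [Pi.add_apply, add_mul, Finset.sum_add_distrib]
  map_smul' c θ := by
    funext k l m
    simp [Pi.smul_apply, smul_eq_mul, Finset.mul_sum, mul_assoc]

/-- Contraction of a 3-tensor with `Φ`: `γ ↦ (γ_{abc}Φ_{abci})_i`. -/
def ctr3 : (Fin 8 → Fin 8 → Fin 8 → ℝ) →ₗ[ℝ] (Fin 8 → ℝ) where
  toFun γ := fun i => ∑ a, ∑ b, ∑ c, γ a b c * Phi a b c i
  map_add' γ η := by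
    funext i
    simp [Pi.add_apply, add_mul, Finset.sum_add_distrib]
  map_smul' c γ := by
    funext i
    simp [Pi.smul_apply, smul_eq_mul, Finset.mul_sum, mul_assoc]

/-- `Λ³₈ = {θ⌟Φ : θ a 1-form}`. -/
def Lambda3_8 : Submodule ℝ (Fin 8 → Fin 8 → Fin 8 → ℝ) := LinearMap.range intPhi

/-- `Λ³₄₈`: the 3-forms `γ` with `γ_{abc}Φ_{abci} = 0` for all `i`. -/
def Lambda3_48 : Submodule ℝ (Fin 8 → Fin 8 → Fin 8 → ℝ) := ThreeForm ⊓ LinearMap.ker ctr3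

/-- 3 by 3 minor of Kronecker deltas, expanded with early exit. -/
def w3Z (a b c i j k : Fin 8) : ℤ :=
  (if a = i then (if b = j then (if c = k then 1 else 0) else 0)
      - (if c = j then (if b = k then 1 else 0) else 0) else 0)
  - (if b = i then (if a = j then (if c = k then 1 else 0) else 0)
      - (if c = j then (if a = k then 1 else 0) else 0) else 0)
  + (if c = i then (if a = j then (if b = k then 1 else 0) else 0)
      - (if b = j then (if a = k then 1 else 0) else 0) else 0)

/-- Integer version of `wedge4`. -/
def w4Z (a b c d i j k l : Fin 8) : ℤ :=
  (if a = i then w3Z b c d j k l else 0) - (if b = i then w3Z a c d j k l else 0)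
  + (if c = i then w3Z a b d j k l else 0) - (if d = i then w3Z a b c j k l else 0)

/-- Integer version of `Phi`. -/
def PhiZ (i j k l : Fin 8) : ℤ :=
    -w4Z 0 1 2 7 i j k l
    + w4Z 0 2 3 6 i j k l
    - w4Z 0 3 4 7 i j k l
    - w4Z 0 5 6 7 i j k l
    + w4Z 0 1 4 6 i j k l
    + w4Z 0 2 4 5 i j k l
    - w4Z 0 1 3 5 i j k l
    - w4Z 3 4 5 6 i j k l
    - w4Z 1 4 5 7 i j k l
    - w4Z 1 2 5 6 i j k l
    - w4Z 1 2 3 4 i j k l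
    - w4Z 2 3 5 7 i j k l
    - w4Z 1 3 6 7 i j k l
    + w4Z 2 4 6 7 i j k l

lemma wedge4_expand (a b c d i j k l : Fin 8) : wedge4 a b c d i j k l =
    kd a i * (kd b j * (kd c k * kd d l - kd d k * kd c l)
      - kd c j * (kd b k * kd d l - kd d k * kd b l) + kd d j * (kd b k * kd c l - kd c k * kd b l))
    - kd b i * (kd a j * (kd c k * kd d l - kd d k * kd c l)
      - kd c j * (kd a k * kd d l - kd d k * kd a l) + kd d j * (kd a k * kd c l - kd c k * kd a l))
    + kd c i * (kd a j * (kd b k * kd d l - kd d k * kd b l)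
      - kd b j * (kd a k * kd d l - kd d k * kd a l) + kd d j * (kd a k * kd b l - kd b k * kd a l))
    - kd d i * (kd a j * (kd b k * kd c l - kd c k * kd b l)
      - kd b j * (kd a k * kd c l - kd c k * kd a l)
      + kd c j * (kd a k * kd b l - kd b k * kd a l)) := by
  unfold wedge4
  simp [Matrix.det_succ_row_zero, Fin.sum_univ_succ, Fin.succAbove]
  ring

lemma w3Z_cast (a b c i j k : Fin 8) : (w3Z a b c i j k : ℝ) =
    kd a i * (kd b j * kd c k - kd c j * kd b k) - kd b i * (kd a j * kd c k - kd c j * kd a k)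
    + kd c i * (kd a j * kd b k - kd b j * kd a k) := by
  unfold w3Z kd
  push_cast
  simp only [ite_mul, one_mul, zero_mul]

lemma w4Z_cast (a b c d i j k l : Fin 8) : (w4Z a b c d i j k l : ℝ) = wedge4 a b c d i j k l := by
  have h : ∀ (p q : Fin 8) (x : ℝ), (if p = q then x else 0) = kd p q * x := by
    intro p q x; simp [kd]
  rw [wedge4_expand]
  unfold w4Z
  push_cast
  simp only [w3Z_cast, h]

lemma PhiZ_cast (i j k l : Fin 8) : (PhiZ i j k l : ℝ) = Phi i j k l := by
  unfold PhiZ Phi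
  push_cast
  simp only [w4Z_cast]

lemma wedge4_swap12 (a b c d i j k l : Fin 8) :
    wedge4 a b c d i j k l = -wedge4 a b c d j i k l := by
  simp only [wedge4_expand]; ring

lemma wedge4_swap23 (a b c d i j k l : Fin 8) :
    wedge4 a b c d i j k l = -wedge4 a b c d i k j l := by
  simp only [wedge4_expand]; ring

lemma wedge4_swap34 (a b c d i j k l : Fin 8) :
    wedge4 a b c d i j k l = -wedge4 a b c d i j l k := by
  simp only [wedge4_expand]; ring

lemma Phi_swap12 (i j k l : Fin 8) : Phi i j k l = -Phi j i k l := by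
  unfold Phi
  simp only [fun a b c d => wedge4_swap12 a b c d i j k l]
  ring

lemma Phi_swap23 (i j k l : Fin 8) : Phi i j k l = -Phi i k j l := by
  unfold Phi
  simp only [fun a b c d => wedge4_swap23 a b c d i j k l]
  ring

lemma Phi_swap34 (i j k l : Fin 8) : Phi i j k l = -Phi i j l k := by
  unfold Phi
  simp only [fun a b c d => wedge4_swap34 a b c d i j k l]
  ring

lemma Phi_cycle (s a b c : Fin 8) : Phi a b c s = -Phi s a b c := by
  rw [Phi_swap34, Phi_swap23, Phi_swap12]; ring

lemma intPhi_apply (θ : Fin 8 → ℝ) (k l m : Fin 8) :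
    intPhi θ k l m = ∑ s, θ s * Phi s k l m := rfl

lemma ctr3_apply (γ : Fin 8 → Fin 8 → Fin 8 → ℝ) (i : Fin 8) :
    ctr3 γ i = ∑ a, ∑ b, ∑ c, γ a b c * Phi a b c i := rfl

lemma intPhi_mem (θ : Fin 8 → ℝ) : intPhi θ ∈ ThreeForm := by
  intro i j k
  simp only [intPhi_apply, ← Finset.sum_neg_distrib]
  constructor
  · refine Finset.sum_congr rfl fun s _ => ?_
    rw [Phi_swap23]; ring
  · refine Finset.sum_congr rfl fun s _ => ?_
    rw [Phi_swap34]; ring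

lemma kd_sum3 (γ : Fin 8 → Fin 8 → Fin 8 → ℝ) (p q r : Fin 8) :
    ∑ a, ∑ b, ∑ c, γ a b c * (kd p a * kd q b * kd r c) = γ p q r := by
  have h : ∀ a b c, γ a b c * (kd p a * kd q b * kd r c)
      = if p = a then (if q = b then (if r = c then γ a b c else 0) else 0) else 0 := by
    intro a b c
    unfold kd
    split_ifs <;> simp
  simp [h]

/-- The contribution of one coordinate 4-form to the contraction, up to the factor 6. -/
def cw (γ : Fin 8 → Fin 8 → Fin 8 → ℝ) (p q r t i : Fin 8) : ℝ :=
  γ p q r * kd t i - γ p q t * kd r i + γ p r t * kd q i - γ q r t * kd p i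

lemma sum_wedge4 (γ : Fin 8 → Fin 8 → Fin 8 → ℝ) (hγ : γ ∈ ThreeForm) (p q r t i : Fin 8) :
    ∑ a, ∑ b, ∑ c, γ a b c * wedge4 p q r t a b c i = 6 * cw γ p q r t i := by
  have alt : ∀ x y z : Fin 8, γ y x z = -γ x y z ∧ γ x z y = -γ x y z ∧ γ z y x = -γ x y z
      ∧ γ y z x = γ x y z ∧ γ z x y = γ x y z := by
    intro x y z
    have h1 := (hγ x y z).1
    have h2 := (hγ x y z).2
    have h3 := (hγ y x z).2
    have h4 := (hγ x z y).1
    have h5 := (hγ z y x).1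
    refine ⟨by linarith, by linarith, by linarith, by linarith, by linarith⟩
  let g : Fin 8 → Fin 8 → Fin 8 → Fin 8 → Fin 8 → Fin 8 → ℝ := fun x y z a b c =>
    γ a b c * (kd x a * kd y b * kd z c)
  let G : Fin 8 → Fin 8 → Fin 8 → Fin 8 → Fin 8 → Fin 8 → ℝ := fun x y z a b c =>
    g x y z a b c - g x z y a b c - g y x z a b c + g y z x a b c + g z x y a b c - g z y x a b c
  have hG : ∀ x y z, ∑ a, ∑ b, ∑ c, G x y z a b c = 6 * γ x y z := by
    intro x y z
    obtain ⟨h1, h2, h3, h4, h5⟩ := alt x y z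
    simp only [G, g, Finset.sum_add_distrib, Finset.sum_sub_distrib, kd_sum3, h1, h2, h3, h4, h5]
    ring
  have key : ∀ a b c, γ a b c * wedge4 p q r t a b c i
      = G p q r a b c * kd t i - G p q t a b c * kd r i + G p r t a b c * kd q i
        - G q r t a b c * kd p i := by
    intro a b c
    rw [wedge4_expand]
    simp only [G, g]
    ring
  simp only [key, Finset.sum_add_distrib, Finset.sum_sub_distrib, ← Finset.sum_mul, hG]
  unfold cw
  ring

lemma ctr3_eq (γ : Fin 8 → Fin 8 → Fin 8 → ℝ) (hγ : γ ∈ ThreeForm) (i : Fin 8) :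
    ctr3 γ i = -(6 * cw γ 0 1 2 7 i)
    + 6 * cw γ 0 2 3 6 i
    - 6 * cw γ 0 3 4 7 i
    - 6 * cw γ 0 5 6 7 i
    + 6 * cw γ 0 1 4 6 i
    + 6 * cw γ 0 2 4 5 i
    - 6 * cw γ 0 1 3 5 i
    - 6 * cw γ 3 4 5 6 i
    - 6 * cw γ 1 4 5 7 i
    - 6 * cw γ 1 2 5 6 i
    - 6 * cw γ 1 2 3 4 i
    - 6 * cw γ 2 3 5 7 i
    - 6 * cw γ 1 3 6 7 i
    + 6 * cw γ 2 4 6 7 i := by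
  rw [ctr3_apply]
  unfold Phi
  simp only [mul_add, mul_sub, mul_neg, Finset.sum_add_distrib, Finset.sum_sub_distrib,
    Finset.sum_neg_distrib, sum_wedge4 γ hγ]

/-- Integer version of `cw` applied to the interior product of a basis vector. -/
def cwZ (s p q r t i : Fin 8) : ℤ :=
  (if t = i then PhiZ s p q r else 0) - (if r = i then PhiZ s p q t else 0)
  + (if q = i then PhiZ s p r t else 0) - (if p = i then PhiZ s q r t else 0)

lemma cwZ_cast (s p q r t i : Fin 8) :
    (cwZ s p q r t i : ℝ) = cw (fun a b c => Phi s a b c) p q r t i := by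
  unfold cwZ cw kd
  push_cast
  simp only [PhiZ_cast, mul_ite, mul_one, mul_zero]

/-- The numerical core: the contraction of `Φ` with itself. -/
lemma core (s i : Fin 8) : -cwZ s 0 1 2 7 i
    + cwZ s 0 2 3 6 i
    - cwZ s 0 3 4 7 i
    - cwZ s 0 5 6 7 i
    + cwZ s 0 1 4 6 i
    + cwZ s 0 2 4 5 i
    - cwZ s 0 1 3 5 i
    - cwZ s 3 4 5 6 i
    - cwZ s 1 4 5 7 i
    - cwZ s 1 2 5 6 i
    - cwZ s 1 2 3 4 i
    - cwZ s 2 3 5 7 i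
    - cwZ s 1 3 6 7 i
    + cwZ s 2 4 6 7 i = (if s = i then (-7 : ℤ) else 0) := by
  revert s i
  decide +kernel

lemma ctr3_Phi (s i : Fin 8) : ctr3 (fun a b c => Phi s a b c) i = -42 * kd s i := by
  rw [ctr3_eq (fun a b c => Phi s a b c) (fun a b c => ⟨Phi_swap23 _ _ _ _, Phi_swap34 _ _ _ _⟩)]
  have h := congrArg (fun z : ℤ => (z : ℝ)) (core s i)
  push_cast at h
  simp only [cwZ_cast] at h
  have h' : (if s = i then (-7 : ℝ) else 0) = -7 * kd s i := by simp [kd]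
  rw [h'] at h
  linarith

lemma ctr3_intPhi (θ : Fin 8 → ℝ) : ctr3 (intPhi θ) = (-42 : ℝ) • θ := by
  have h : intPhi θ = ∑ s, θ s • (fun a b c => Phi s a b c) := by
    funext a b c
    simp [intPhi_apply, Finset.sum_apply]
  rw [h, map_sum]
  funext i
  simp [Finset.sum_apply, ctr3_Phi, kd]
  ring

lemma intPhi_injective : Function.Injective ⇑intPhi := by
  intro x y hxy
  have h := congrArg ctr3 hxy
  rw [ctr3_intPhi, ctr3_intPhi] at h
  exact smul_right_injective _ (by norm_num : (-42 : ℝ) ≠ 0) h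

lemma inf_eq_bot : Lambda3_8 ⊓ Lambda3_48 = ⊥ := by
  rw [eq_bot_iff]
  rintro γ ⟨⟨θ, rfl⟩, -, hk⟩
  have hk' : ctr3 (intPhi θ) = 0 := hk
  rw [ctr3_intPhi] at hk'
  have : θ = 0 := (smul_eq_zero.mp hk').resolve_left (by norm_num)
  simp [this]

lemma sup_eq : Lambda3_8 ⊔ Lambda3_48 = ThreeForm := by
  apply le_antisymm
  · refine sup_le ?_ inf_le_left
    rintro _ ⟨θ, rfl⟩
    exact intPhi_mem θ
  · intro γ hγ
    have h8 : intPhi ((-42 : ℝ)⁻¹ • ctr3 γ) ∈ Lambda3_8 := ⟨_, rfl⟩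
    have h48 : γ - intPhi ((-42 : ℝ)⁻¹ • ctr3 γ) ∈ Lambda3_48 := by
      refine ⟨ThreeForm.sub_mem hγ (intPhi_mem _), ?_⟩
      show ctr3 _ = 0
      rw [map_sub, ctr3_intPhi, smul_smul]
      norm_num
    have := Submodule.add_mem_sup h8 h48
    simpa using this

lemma orth (γ : Fin 8 → Fin 8 → Fin 8 → ℝ) (hγ : γ ∈ Lambda3_8)
    (η : Fin 8 → Fin 8 → Fin 8 → ℝ) (hη : η ∈ Lambda3_48) :
    (∑ i, ∑ j, ∑ k, γ i j k * η i j k) = 0 := by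
  obtain ⟨θ, rfl⟩ := hγ
  have hk : ctr3 η = 0 := hη.2
  have h : ∀ i j k, intPhi θ i j k * η i j k = ∑ s, -(θ s * (η i j k * Phi i j k s)) := by
    intro i j k
    rw [intPhi_apply, Finset.sum_mul]
    refine Finset.sum_congr rfl fun s _ => ?_
    rw [Phi_cycle s i j k]; ring
  have e : ∑ i, ∑ j, ∑ k, intPhi θ i j k * η i j k = ∑ s, -(θ s * ctr3 η s) := by
    simp only [h, ctr3_apply, Finset.mul_sum, ← Finset.sum_neg_distrib]
    calc _ = ∑ i, ∑ j, ∑ s, ∑ k, -(θ s * (η i j k * Phi i j k s)) :=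
          Finset.sum_congr rfl fun i _ => Finset.sum_congr rfl fun j _ => Finset.sum_comm
      _ = ∑ i, ∑ s, ∑ j, ∑ k, -(θ s * (η i j k * Phi i j k s)) :=
          Finset.sum_congr rfl fun i _ => Finset.sum_comm
      _ = _ := Finset.sum_comm
  rw [e, hk]
  simp

/-- Strictly increasing triples. -/
abbrev Inc : Type := {t : Fin 8 × Fin 8 × Fin 8 // t.1 < t.2.1 ∧ t.2.1 < t.2.2}

/-- Restriction of a 3-form to increasing triples. -/
def resInc : ThreeForm →ₗ[ℝ] (Inc → ℝ) where
  toFun γ := fun t => γ.1 t.1.1 t.1.2.1 t.1.2.2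
  map_add' _ _ := rfl
  map_smul' _ _ := rfl

lemma resInc_injective : Function.Injective resInc := by
  rw [← LinearMap.ker_eq_bot, LinearMap.ker_eq_bot']
  rintro ⟨γ, hγ⟩ h
  have inc : ∀ i j k : Fin 8, i < j → j < k → γ i j k = 0 := fun i j k h1 h2 =>
    congrFun h ⟨(i, j, k), h1, h2⟩
  have s12 : ∀ i j k, γ i j k = -γ j i k := fun i j k => (hγ i j k).1
  have s23 : ∀ i j k, γ i j k = -γ i k j := fun i j k => (hγ i j k).2
  have r12 : ∀ i k, γ i i k = 0 := fun i k => by linarith [s12 i i k]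
  have r23 : ∀ i k, γ i k k = 0 := fun i k => by linarith [s23 i k k]
  have first : ∀ i j k : Fin 8, i < j → i < k → γ i j k = 0 := by
    intro i j k h1 h2
    rcases lt_trichotomy j k with h3 | rfl | h3
    · exact inc i j k h1 h3
    · exact r23 i j
    · rw [s23, inc i k j h2 h3, neg_zero]
  have half : ∀ i j k : Fin 8, i < j → γ i j k = 0 := by
    intro i j k h1
    rcases lt_trichotomy i k with h3 | rfl | h3
    · exact first i j k h1 h3
    · rw [s23, r12, neg_zero]
    · rw [s23, s12, first k i j h3 (h3.trans h1)]; simp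
  apply Subtype.ext
  funext i j k
  show γ i j k = 0
  rcases lt_trichotomy i j with h3 | rfl | h3
  · exact half i j k h3
  · exact r12 i k
  · rw [s12, half j i k h3, neg_zero]

lemma resInc_surjective : Function.Surjective resInc := by
  intro f
  let g : Fin 8 → Fin 8 → Fin 8 → ℝ := fun i j k =>
    if h : i < j ∧ j < k then f ⟨(i, j, k), h⟩ else 0
  refine ⟨⟨fun i j k => g i j k - g j i k - g i k j - g k j i + g j k i + g k i j, ?_⟩, ?_⟩
  · intro i j k
    constructor <;> ring
  · funext ⟨⟨i, j, k⟩, h1, h2⟩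
    simp only at h1 h2
    have z : ∀ a b c : Fin 8, ¬ (a < b ∧ b < c) → g a b c = 0 := fun a b c h => dif_neg h
    show g i j k - g j i k - g i k j - g k j i + g j k i + g k i j = _
    rw [z j i k (by omega), z i k j (by omega), z k j i (by omega), z j k i (by omega),
      z k i j (by omega)]
    simp [g, h1, h2]

lemma finrank_ThreeForm : Module.finrank ℝ ↥ThreeForm = 56 := by
  rw [(LinearEquiv.ofBijective resInc ⟨resInc_injective, resInc_surjective⟩).finrank_eq,
    Module.finrank_fintype_fun_eq_card]
  decide +kernel

lemma finrank_Lambda3_8 : Module.finrank ℝ ↥Lambda3_8 = 8 := by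
  unfold Lambda3_8
  rw [LinearMap.finrank_range_of_inj intPhi_injective]
  simp

lemma finrank_Lambda3_48 : Module.finrank ℝ ↥Lambda3_48 = 48 := by
  have h := Submodule.finrank_sup_add_finrank_inf_eq Lambda3_8 Lambda3_48
  rw [sup_eq, inf_eq_bot, finrank_ThreeForm, finrank_Lambda3_8, finrank_bot] at h
  omega

/-- `θ ↦ θ⌟Φ` is injective, and the 56-dimensional space of 3-forms on ℝ⁸ is the
orthogonal direct sum of `Λ³₈` (dimension 8) and `Λ³₄₈` (dimension 48). -/
theorem spin7_three_form_decomposition :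
    Function.Injective ⇑intPhi ∧
    Lambda3_8 ⊔ Lambda3_48 = ThreeForm ∧
    Lambda3_8 ⊓ Lambda3_48 = ⊥ ∧
    (∀ γ ∈ Lambda3_8, ∀ η ∈ Lambda3_48, (∑ i, ∑ j, ∑ k, γ i j k * η i j k) = 0) ∧
    Module.finrank ℝ ↥ThreeForm = 56 ∧
    Module.finrank ℝ ↥Lambda3_8 = 8 ∧
    Module.finrank ℝ ↥Lambda3_48 = 48 := by
  exact ⟨intPhi_injective, sup_eq, inf_eq_bot, orth, finrank_ThreeForm, finrank_Lambda3_8,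
    finrank_Lambda3_48⟩
end
end

section
/- Let Ω_Φ be the operator on 4-forms on ℝ^8 defined by (Ω_Φ(σ))_{ijkl} = σ_{ijpq}Φ_{pqkl} + σ_{ikpq}Φ_{pqlj} + σ_{ilpq}Φ_{pqjk} + σ_{jkpq}Φ_{pqil} + σ_{jlpq}Φ_{pqki} + σ_{klpq}Φ_{pqij}. Then Ω_Φ(Φ) = −24 Φ. -/
/-!
We work in ℝ⁸ with the standard basis `e₀, …, e₇`.  A `k`-form is a totally antisymmetric
map `(Fin 8)^k → ℝ`; repeated indices are summed over `Fin 8` and `kd` is the Kronecker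
delta.  `Phi` is the fundamental 4-form of the standard `Spin(7)`-structure on ℝ⁸,
`Φ = -e₀₁₂₇ + e₀₂₃₆ - e₀₃₄₇ - e₀₅₆₇ + e₀₁₄₆ + e₀₂₄₅ - e₀₁₃₅
     - e₃₄₅₆ - e₁₄₅₇ - e₁₂₅₆ - e₁₂₃₄ - e₂₃₅₇ - e₁₃₆₇ + e₂₄₆₇`.
-/

noncomputable section

/-- Table of the values `Φ_{ijkl} + 1`, in base 4, position `512 i + 64 j + 8 k + l`. -/
def phiTable : ℕ := 0x5555555555555555555555555555555555555555555455655551545555955955555555565555555155455595565545555555554555595555555465555155559555555559556555565555515545555455555556555515455559555555555455595555551554555955655555565555554555555155655555155655555155655555555555555556554555595655551551555555555555555555555555555555555555545555555555155655555155659555556555555595555551551555555655515551555554555955555555569555554554555555555995555554555551555595559555555545555415555955555556555955555515555559556555155455555555555554555555595565551554556555555655555555559554555559554515555555555555555555555555555555555555515515555555556555555695555545554556555555455555559555555455595595555155555554155555556555565556555565555515555556455555555515455595555555556555515455559555555555556555515555555645555955551555455555551555555955955555545559555955955555555545555554155555655555555555555555555555555555555555545155655555555555555155659555655515555556555555595555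5515515551555556955555555545559555554555559555515545555515555955655555555555555155455554555559556555565555595555565551555555555415555565556554555555655555551555555655515556595545555555555555595545155555555555555555555555555555555555515555569555555155555555565545554555955555545565555554555555595554555545555995555555655551555555555554555595655551555555555655515655555555511555555655555955551555155559555555569555555545555455455595555554555555515555559559555955555415555559555555555455655555555555555555555555555555555555555451556555551556555555555595555559559556555155455555551555555555555595565551554555555455555565551555555565555695555155555554555455554555559555555465555555559559555554155555555565551555556555655515555556554555555655555551555556595545555595545555555555155555555555555555555555555555555555554556555515455559559555555555555555595545555595545555595545555551555555955555515545559556555555655515555555554555595655551555555515555955655555955551554555555556555565555115555555455559555555555155155455595565555555955555555565545555956555515515555555555555555555555555555555555555555555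

/-- Components of `Φ` looked up in the table. -/
def phiT (i j k l : ℕ) : ℤ :=
  Int.subNatNat (Nat.land (Nat.shiftRight phiTable (2 * (512 * i + 64 * j + 8 * k + l))) 3) 1

/-- Integer 1×1, ..., 4×4 minors of Kronecker deltas, by Laplace expansion. -/
def wz1 (a i : ℕ) : ℤ := cond (Nat.beq a i) 1 0

def wz2 (a b i j : ℕ) : ℤ := cond (Nat.beq a i) (wz1 b j) 0 - cond (Nat.beq a j) (wz1 b i) 0

def wz3 (a b c i j k : ℕ) : ℤ :=
  cond (Nat.beq a i) (wz2 b c j k) 0 - cond (Nat.beq a j) (wz2 b c i k) 0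
    + cond (Nat.beq a k) (wz2 b c i j) 0

def wz4 (a b c d i j k l : ℕ) : ℤ :=
  cond (Nat.beq a i) (wz3 b c d j k l) 0 - cond (Nat.beq a j) (wz3 b c d i k l) 0
    + cond (Nat.beq a k) (wz3 b c d i j l) 0 - cond (Nat.beq a l) (wz3 b c d i j k) 0

def phiZ (i j k l : ℕ) : ℤ :=
    -wz4 0 1 2 7 i j k l + wz4 0 2 3 6 i j k l - wz4 0 3 4 7 i j k l
  - wz4 0 5 6 7 i j k l + wz4 0 1 4 6 i j k l + wz4 0 2 4 5 i j k l
  - wz4 0 1 3 5 i j k l - wz4 3 4 5 6 i j k l - wz4 1 4 5 7 i j k l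
  - wz4 1 2 5 6 i j k l - wz4 1 2 3 4 i j k l - wz4 2 3 5 7 i j k l
  - wz4 1 3 6 7 i j k l + wz4 2 4 6 7 i j k l

theorem cond_kd (a i : Fin 8) (z : ℤ) :
    ((cond (Nat.beq a.val i.val) z 0 : ℤ) : ℝ) = kd a i * (z : ℝ) := by
  unfold kd
  by_cases h : a = i
  · subst h
    simp
  · have h' : Nat.beq a.val i.val = false := by
      rw [Bool.eq_false_iff]
      intro hb
      exact h (Fin.ext (Nat.eq_of_beq_eq_true hb))
    rw [h']
    simp [h]

theorem wedge4_eq (a b c d i j k l : Fin 8) :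
    wedge4 a b c d i j k l = ((wz4 a.val b.val c.val d.val i.val j.val k.val l.val : ℤ) : ℝ) := by
  simp only [wz4, wz3, wz2, wz1, Int.cast_add, Int.cast_sub, cond_kd, Int.cast_one]
  simp [wedge4, Matrix.det_succ_row_zero, Fin.sum_univ_succ, Fin.succAbove]
  ring

theorem Phi_eq_phiZ (i j k l : Fin 8) :
    Phi i j k l = ((phiZ i.val j.val k.val l.val : ℤ) : ℝ) := by
  simp only [Phi, phiZ, wedge4_eq, Int.cast_add, Int.cast_sub, Int.cast_neg]
  rfl

def all8 (f : ℕ → Bool) : Bool :=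
  f 0 && f 1 && f 2 && f 3 && f 4 && f 5 && f 6 && f 7

theorem all8_spec {f : ℕ → Bool} (h : all8 f = true) (i : Fin 8) : f i.val = true := by
  simp only [all8, Bool.and_eq_true] at h
  fin_cases i <;> simp_all

theorem phiZ_check : (all8 fun i => all8 fun j => all8 fun k => all8 fun l =>
    decide (phiZ i j k l = phiT i j k l)) = true := by
  decide +kernel

theorem Phi_eq (i j k l : Fin 8) :
    Phi i j k l = ((phiT i.val j.val k.val l.val : ℤ) : ℝ) := by
  rw [Phi_eq_phiZ, of_decide_eq_true (all8_spec (all8_spec (all8_spec (all8_spec phiZ_check i) j) k) l)]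

def sum8 (f : ℕ → ℤ) : ℤ := f 0 + f 1 + f 2 + f 3 + f 4 + f 5 + f 6 + f 7

theorem sum8_eq (f : ℕ → ℤ) : ((sum8 f : ℤ) : ℝ) = ∑ p : Fin 8, ((f p.val : ℤ) : ℝ) := by
  simp [sum8, Fin.sum_univ_eight]

/-- The contraction `Φ_{ijpq} Φ_{pqkl}`. -/
def contr (i j k l : ℕ) : ℤ := sum8 fun p => sum8 fun q => phiT i j p q * phiT p q k l

def delta (a i : ℕ) : ℤ := cond (Nat.beq a i) 1 0

theorem contr_check : (all8 fun i => all8 fun j => cond (Nat.ble j i) true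
    (all8 fun k => all8 fun l => cond (Nat.ble l k) true <|
    decide (contr i j k l = 6 * (delta i k * delta j l - delta i l * delta j k)
      - 4 * phiT i j k l))) = true := by
  decide +kernel

theorem delta_eq (a i : Fin 8) : ((delta a.val i.val : ℤ) : ℝ) = kd a i := by
  simpa [delta] using cond_kd a i 1

theorem Phi_anti (i j k l : Fin 8) :
    Phi j i k l = -Phi i j k l ∧ Phi i j l k = -Phi i j k l := by
  have h (a b c d : Fin 8) : wedge4 a b c d j i k l = -wedge4 a b c d i j k l ∧
      wedge4 a b c d i j l k = -wedge4 a b c d i j k l := by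
    simp only [wedge4_eq, wz4, wz3, wz2, wz1, Int.cast_add, Int.cast_sub, cond_kd, Int.cast_one]
    constructor <;> ring
  constructor
  · simp only [Phi, fun a b c d => (h a b c d).1]
    ring
  · simp only [Phi, fun a b c d => (h a b c d).2]
    ring

theorem Phi_contr_lt (i j k l : Fin 8) (hij : i < j) (hkl : k < l) :
    (∑ p, ∑ q, Phi i j p q * Phi p q k l)
      = 6 * (kd i k * kd j l - kd i l * kd j k) - 4 * Phi i j k l := by
  have h1 := all8_spec (all8_spec contr_check i) j
  have hb1 : Nat.ble j.val i.val = false := by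
    rw [Bool.eq_false_iff]
    intro hb
    exact absurd (Nat.le_of_ble_eq_true hb) (not_le.mpr hij)
  have hb2 : Nat.ble l.val k.val = false := by
    rw [Bool.eq_false_iff]
    intro hb
    exact absurd (Nat.le_of_ble_eq_true hb) (not_le.mpr hkl)
  rw [hb1, cond_false] at h1
  have h2 := all8_spec (all8_spec h1 k) l
  rw [hb2, cond_false] at h2
  have h3 := congrArg (fun z : ℤ => (z : ℝ)) (of_decide_eq_true h2)
  simp only [contr, sum8_eq, Int.cast_mul, Int.cast_sub, delta_eq, ← Phi_eq] at h3
  exact_mod_cast h3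

theorem Phi_contr_left (i j k l : Fin 8) (hij : i < j) :
    (∑ p, ∑ q, Phi i j p q * Phi p q k l)
      = 6 * (kd i k * kd j l - kd i l * kd j k) - 4 * Phi i j k l := by
  rcases lt_trichotomy k l with h | h | h
  · exact Phi_contr_lt i j k l hij h
  · subst h
    have h0 (p q : Fin 8) : Phi p q k k = 0 := by
      linarith [(Phi_anti p q k k).2]
    simp only [h0, mul_zero, Finset.sum_const_zero]
    ring
  · have h' := Phi_contr_lt i j l k hij h
    simp only [fun p q => (Phi_anti p q k l).2, mul_neg, Finset.sum_neg_distrib] at h'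
    linarith

/-- `Φ_{ijpq} Φ_{pqkl} = 6 (δ_{ik} δ_{jl} - δ_{il} δ_{jk}) - 4 Φ_{ijkl}`. -/
theorem Phi_contr (i j k l : Fin 8) :
    (∑ p, ∑ q, Phi i j p q * Phi p q k l)
      = 6 * (kd i k * kd j l - kd i l * kd j k) - 4 * Phi i j k l := by
  rcases lt_trichotomy i j with h | h | h
  · exact Phi_contr_left i j k l h
  · subst h
    have h0 (p q : Fin 8) : Phi i i p q = 0 := by
      linarith [(Phi_anti i i p q).1]
    simp only [h0, zero_mul, mul_zero, Finset.sum_const_zero]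
    ring
  · have h' := Phi_contr_left j i k l h
    simp only [fun p q => (Phi_anti i j p q).1, neg_mul, Finset.sum_neg_distrib] at h'
    linarith

theorem wedge4_swap (a b c d i j k l : Fin 8) :
    wedge4 a b c d i k l j = wedge4 a b c d i j k l ∧
    wedge4 a b c d i l j k = wedge4 a b c d i j k l ∧
    wedge4 a b c d j k i l = wedge4 a b c d i j k l ∧
    wedge4 a b c d j l k i = wedge4 a b c d i j k l ∧
    wedge4 a b c d k l i j = wedge4 a b c d i j k l := by
  simp only [wedge4_eq, wz4, wz3, wz2, wz1, Int.cast_add, Int.cast_sub, cond_kd, Int.cast_one]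
  refine ⟨?_, ?_, ?_, ?_, ?_⟩ <;> ring

theorem kd_comm (a b : Fin 8) : kd a b = kd b a := by
  simp only [kd, eq_comm]

/-- `Ω_Φ(Φ) = -24 Φ`. -/
theorem spin7_omega_of_fundamental_form :
    ∀ i j k l : Fin 8,
      ((∑ p, ∑ q, Phi i j p q * Phi p q k l) + (∑ p, ∑ q, Phi i k p q * Phi p q l j)
        + (∑ p, ∑ q, Phi i l p q * Phi p q j k) + (∑ p, ∑ q, Phi j k p q * Phi p q i l)
        + (∑ p, ∑ q, Phi j l p q * Phi p q k i) + (∑ p, ∑ q, Phi k l p q * Phi p q i j))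
      = -24 * Phi i j k l := by
  intro i j k l
  have h1 : Phi i k l j = Phi i j k l := by
    simp only [Phi, fun a b c d => (wedge4_swap a b c d i j k l).1]
  have h2 : Phi i l j k = Phi i j k l := by
    simp only [Phi, fun a b c d => (wedge4_swap a b c d i j k l).2.1]
  have h3 : Phi j k i l = Phi i j k l := by
    simp only [Phi, fun a b c d => (wedge4_swap a b c d i j k l).2.2.1]
  have h4 : Phi j l k i = Phi i j k l := by
    simp only [Phi, fun a b c d => (wedge4_swap a b c d i j k l).2.2.2.1]
  have h5 : Phi k l i j = Phi i j k l := by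
    simp only [Phi, fun a b c d => (wedge4_swap a b c d i j k l).2.2.2.2]
  simp only [Phi_contr, h1, h2, h3, h4, h5]
  rw [kd_comm j i, kd_comm k i, kd_comm l i, kd_comm k j, kd_comm l j, kd_comm l k]
  ring
end
end
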